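/- arXiv:2503.12333 — 3 statements merged into one kernel-verified Lean document; each statement's English description precedes it below -/
import Mathlib

section
/- Let l, v > 0, 0 < d_j < d_i, and let u' be a real number with d_i·v/(l + d_j) < u' ≤ v. Let s : ℝ → ℝ be a continuous speed function with u' ≤ s(τ) ≤ v for all τ ∈ [0, d_i/u'], and define the follower's front position x(t) = −d_i + ∫₀ᵗ s(τ) dτ. Then there exists a time t with d_j/v < t < (d_j + l)/v and x(t) = 0; that is, the follower's front crosses Q at a time when the leader occupies Q. -/
open intervalIntegral in
/-- Let `u'` satisfy `d_i·v/(l+d_j) < u' ≤ v`, and let the follower move with a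
continuous speed profile `s` with `u' ≤ s(τ) ≤ v` on `[0, d_i/u']`, so its
front position is `x(t) = −d_i + ∫₀ᵗ s`. Then the follower's front crosses
`Q = 0` at some time strictly within the leader's occupancy window
`(d_j/v, (d_j+l)/v)`. -/
theorem fast_speed_profile_crosses_during_occupancy
    (l v dj di u' : ℝ) (hl : 0 < l) (hv : 0 < v)
    (hdj : 0 < dj) (hdij : dj < di)
    (hu'₁ : di * v / (l + dj) < u') (hu'₂ : u' ≤ v)
    (s : ℝ → ℝ) (hs : Continuous s)
    (hsb : ∀ τ ∈ Set.Icc (0 : ℝ) (di / u'), u' ≤ s τ ∧ s τ ≤ v)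
    (x : ℝ → ℝ) (hx : ∀ t, x t = -di + ∫ τ in (0 : ℝ)..t, s τ) :
    ∃ t : ℝ, dj / v < t ∧ t < (dj + l) / v ∧ x t = 0 := by
  have hdi : 0 < di := hdj.trans hdij
  have hu' : 0 < u' := lt_trans (by positivity) hu'₁
  have hT : 0 ≤ di / u' := by positivity
  have hint : ∀ a b : ℝ, IntervalIntegrable s MeasureTheory.volume a b :=
    fun a b => hs.intervalIntegrable a b
  have hxc : Continuous x := by
    rw [funext hx]
    exact continuous_const.add (intervalIntegral.continuous_primitive hint 0)
  have hx0 : x 0 ≤ 0 := by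
    rw [hx, intervalIntegral.integral_same]
    linarith
  have hxT : 0 ≤ x (di / u') := by
    have h := intervalIntegral.integral_mono_on hT
      (intervalIntegrable_const (c := u')) (hint 0 (di / u')) fun τ hτ => (hsb τ hτ).1
    rw [intervalIntegral.integral_const, smul_eq_mul, sub_zero,
      div_mul_cancel₀ _ hu'.ne'] at h
    rw [hx]
    linarith
  obtain ⟨t, ⟨ht0, htT⟩, hxt⟩ := intermediate_value_Icc hT hxc.continuousOn ⟨hx0, hxT⟩
  refine ⟨t, ?_, htT.trans_lt ?_, hxt⟩
  · have h := intervalIntegral.integral_mono_on ht0 (hint 0 t)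
      (intervalIntegrable_const (c := v)) fun τ hτ => (hsb τ ⟨hτ.1, hτ.2.trans htT⟩).2
    rw [intervalIntegral.integral_const, smul_eq_mul, sub_zero] at h
    rw [hx] at hxt
    rw [div_lt_iff₀ hv]
    linarith
  · rw [div_lt_iff₀ (by positivity)] at hu'₁
    rw [div_lt_div_iff₀ hu' hv]
    linarith
end

section
/- Let l, v > 0 and 0 < d_j < d_i < d_j + l, and set u = d_i·v/(l + d_j) and t* = (l + d_j)/v. Let s : ℝ → ℝ be a continuous speed function with 0 ≤ s(τ) ≤ v for all τ ∈ [0, t*], and define x(t) = −d_i + ∫₀ᵗ s(τ) dτ. If the follower's front does not pass Q before the leader clears it, i.e., x(t) ≤ 0 for all t ∈ [0, t*], then the minimum of s over [0, t*] is at most u. Hence Strategy 1, whose follower moves at the constant speed u on [0, t*], maximizes the minimum speed among all collision-free follower speed profiles (it is minimally invasive). -/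
open intervalIntegral in
/-- If a continuous follower speed profile `s` with `0 ≤ s(τ) ≤ v` on `[0, t*]`
(where `t* = (l+d_j)/v`) is collision-free, i.e. the follower's front
`x(t) = −d_i + ∫₀ᵗ s` satisfies `x(t) ≤ 0` on `[0, t*]`, then the minimum of
`s` on `[0, t*]` is at most the Strategy-1 speed `u = d_i·v/(l+d_j)`: some
point of `[0, t*]` has `s ≤ u`.  Hence Strategy 1 maximizes the minimum speed
among collision-free follower profiles (it is minimally invasive). -/
theorem strategy1_maximizes_min_speed
    (l v dj di : ℝ) (hl : 0 < l) (hv : 0 < v)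
    (hdj : 0 < dj) (hdij : dj < di) (hdil : di < dj + l)
    (u tstar : ℝ) (hu : u = di * v / (l + dj)) (htstar : tstar = (l + dj) / v)
    (s : ℝ → ℝ) (hs : Continuous s)
    (hsb : ∀ τ ∈ Set.Icc (0 : ℝ) tstar, 0 ≤ s τ ∧ s τ ≤ v)
    (x : ℝ → ℝ) (hx : ∀ t, x t = -di + ∫ τ in (0 : ℝ)..t, s τ)
    (hsafe : ∀ t ∈ Set.Icc (0 : ℝ) tstar, x t ≤ 0) :
    ∃ τ ∈ Set.Icc (0 : ℝ) tstar, s τ ≤ u := by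
  have hld : 0 < l + dj := add_pos hl hdj
  have ht : 0 < tstar := htstar ▸ div_pos hld hv
  have hut : tstar * u = di := by
    rw [hu, htstar]
    field_simp
  by_contra! h
  have hlt : ∫ _ in (0 : ℝ)..tstar, u < ∫ τ in (0 : ℝ)..tstar, s τ :=
    integral_lt_integral_of_continuousOn_of_le_of_exists_lt ht continuousOn_const
      hs.continuousOn (fun τ hτ => (h τ (Set.Ioc_subset_Icc_self hτ)).le)
      ⟨0, Set.left_mem_Icc.2 ht.le, h 0 (Set.left_mem_Icc.2 ht.le)⟩
  rw [integral_const, sub_zero, smul_eq_mul, hut] at hlt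
  have hend := hsafe tstar (Set.right_mem_Icc.2 ht.le)
  rw [hx] at hend
  linarith
end

section
/- Let l, v, d_i, d_j > 0 and g > 0, and set t* = (l + d_j)/v. Let x : ℝ → ℝ be Lipschitz with constant v on [0, T] with T ≥ 0, x(0) = −d_i, x(T) = g, and suppose x(t) ≤ 0 for all t ∈ [0, min(T, t*)] (the follower does not pass Q before the leader clears it). Then T ≥ t* + g/v; that is, any collision-avoiding follower trajectory reaches the goal no sooner than time (l + d_j)/v + g/v. -/
/-- Any collision-avoiding follower trajectory `x` (Lipschitz with constant `v`
on `[0, T]`, starting at `−d_i`, ending at the goal `g > 0`, and staying `≤ 0`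
until the leader clears `Q` at time `t* = (l+d_j)/v`) reaches the goal no
sooner than `t* + g/v`. -/
theorem follower_goal_time_lower_bound
    (l v di dj g : ℝ) (hl : 0 < l) (hv : 0 < v)
    (hdi : 0 < di) (hdj : 0 < dj) (hg : 0 < g)
    (T : ℝ) (hT : 0 ≤ T)
    (x : ℝ → ℝ)
    (hlip : LipschitzOnWith (Real.toNNReal v) x (Set.Icc 0 T))
    (hx0 : x 0 = -di) (hxT : x T = g)
    (hsafe : ∀ t ∈ Set.Icc (0 : ℝ) (min T ((l + dj) / v)), x t ≤ 0) :
    T ≥ (l + dj) / v + g / v := by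
  have hclear : 0 ≤ (l + dj) / v := by positivity
  have hlt : (l + dj) / v < T := by
    by_contra! h
    have := hsafe T ⟨hT, le_min le_rfl h⟩
    linarith
  have hsafe_clear := hsafe _ ⟨hclear, le_min hlt.le le_rfl⟩
  have hdist := hlip.dist_le_mul T ⟨hT, le_rfl⟩ _ ⟨hclear, hlt.le⟩
  rw [Real.coe_toNNReal v hv.le, Real.dist_eq, Real.dist_eq, abs_of_pos (sub_pos.2 hlt), hxT]
    at hdist
  have hgoal : g / v ≤ T - (l + dj) / v := by
    rw [div_le_iff₀' hv]
    linarith [le_abs_self (g - x ((l + dj) / v))]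
  linarith
end
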